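/- Assume α = β (the sieved ultraspherical case). For every integer n ≥ 0, define 𝒬_n(z) = (−ψ_{2n+2}(z;N) + (1 − a_{2n+1}(N))·ψ_{2n+1}(z;N))/(z − z^{−1}) (the sieved ultraspherical polynomial of the second kind in the variable x = z + 1/z). Then for all z ∈ ℂ with z ≠ 0, z² ≠ 1 and z^{2N} ≠ 1, one has z²·𝒬_n″(z) + Ĉ(z)·𝒬_n′(z) + Σ_{k=0}^{N−1} B̂_k(z)·(𝒬_n(q^k/z) − 𝒬_n(z)) = n·(n + (2α+1)N + 2)·𝒬_n(z), where B̂_k(z) = ((q^{2k} − z²)/(q^k(z² − 1)))·B_k(z) with B_k(z) = 2(2α+1)q^k z²/(q^k − z²)², and Ĉ(z) = C(z) + 2z(z²+1)/(z²−1) with C(z) = z·(1 + N(2α+1) + 2N(2α+1)/(z^{2N} − 1)). -/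

import Mathlib

open Finset

/-- Monic OPUC associated to a sequence of (real) Verblunsky parameters. -/
noncomputable def Phi (c : ℕ → ℝ) : ℕ → ℂ → ℂ
  | 0, _ => 1
  | n + 1, z => z * Phi c n z - (c n : ℂ) * z ^ n * Phi c n z⁻¹

/-- CMV Laurent polynomials: ψ_{2m} z = z^m Φ_{2m}(1/z), ψ_{2m+1} z = z^{-m} Φ_{2m+1}(z). -/
noncomputable def psi (c : ℕ → ℝ) (n : ℕ) (z : ℂ) : ℂ :=
  if Even n then z ^ (n / 2) * Phi c n z⁻¹
  else z ^ (-((n / 2 : ℕ) : ℤ)) * Phi c n z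

/-- Verblunsky parameters of the Jacobi OPUC. -/
noncomputable def jacobiA (α β : ℝ) (n : ℕ) : ℝ :=
  -(α + 1 / 2 + (-1 : ℝ) ^ (n + 1) * (β + 1 / 2)) / (n + α + β + 2)

/-- Sieved Verblunsky parameters: a_n(N) = a_{k-1} if n = N k - 1 (k ≥ 1), 0 otherwise. -/
noncomputable def sievedA (α β : ℝ) (N n : ℕ) : ℝ :=
  if N ∣ (n + 1) then jacobiA α β ((n + 1) / N - 1) else 0

/-- The primitive N-th root of unity q = exp(2πi/N). -/
noncomputable def qN (N : ℕ) : ℂ := Complex.exp (2 * Real.pi * Complex.I / N)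

/-- The coefficients A_k(z;N) of the Dunkl-type operator L(N). -/
noncomputable def Acoef (α β : ℝ) (N k : ℕ) (z : ℂ) : ℂ :=
  if Even N then
    ((α : ℂ) + β + 1 + (-1 : ℂ) ^ k * ((α : ℂ) - β)) * z ^ 2 / (qN N ^ k - z ^ 2)
  else
    (((α : ℂ) + β + 1) * z ^ 2 +
        (if Even k then qN N ^ ((k : ℤ) / 2) else qN N ^ (((k : ℤ) - (N : ℤ)) / 2)) *
          ((α : ℂ) - β) * z) /
      (qN N ^ k - z ^ 2)

/-- B(z) = N((α+β+1) z^{2N} + (α-β) z^N)/(z^{2N} - 1). -/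
noncomputable def Bfun (α β : ℝ) (N : ℕ) (z : ℂ) : ℂ :=
  (N : ℂ) * (((α : ℂ) + β + 1) * z ^ (2 * N) + ((α : ℂ) - β) * z ^ N) / (z ^ (2 * N) - 1)

/-- The Dunkl-type operator L(N). -/
noncomputable def Lop (α β : ℝ) (N : ℕ) (f : ℂ → ℂ) : ℂ → ℂ := fun z =>
  z * deriv f z + ∑ k ∈ Finset.range N, Acoef α β N k z * (f (qN N ^ k / z) - f z)

/-- A function ℂ∖{0} → ℂ is a Laurent polynomial. -/
def IsLaurentPoly (f : ℂ → ℂ) : Prop :=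
  ∃ (m : ℕ) (p : Polynomial ℂ), ∀ z : ℂ, z ≠ 0 → f z = Polynomial.eval z p / z ^ m

/-- Sieved Jacobi polynomial of the first kind, as a function of z (x = z + 1/z). -/
noncomputable def sievP (α β : ℝ) (N n : ℕ) (z : ℂ) : ℂ :=
  psi (sievedA α β N) (2 * n) z
    + (1 + (sievedA α β N (2 * n - 1) : ℂ)) * psi (sievedA α β N) (2 * n - 1) z

/-- χ_n(z) = (z - 1/z) Q_{n-1}(x(z)), with Q the sieved Jacobi polynomial of 2nd kind. -/
noncomputable def sievChi (α β : ℝ) (N n : ℕ) (z : ℂ) : ℂ :=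
  -psi (sievedA α β N) (2 * n) z
    + (1 - (sievedA α β N (2 * n - 1) : ℂ)) * psi (sievedA α β N) (2 * n - 1) z

/-- The sieved ultraspherical polynomial of the second kind, as a function of z:
𝒬_n(z) = (-ψ_{2n+2}(z;N) + (1 - a_{2n+1}(N)) ψ_{2n+1}(z;N))/(z - 1/z). -/
noncomputable def sievQ (α : ℝ) (N n : ℕ) (z : ℂ) : ℂ :=
  (-psi (sievedA α α N) (2 * n + 2) z
      + (1 - (sievedA α α N (2 * n + 1) : ℂ)) * psi (sievedA α α N) (2 * n + 1) z)
    / (z - z⁻¹)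

noncomputable def FGpol (l : ℂ) : ℕ → Polynomial ℂ × Polynomial ℂ
  | 0 => (1, 1)
  | m + 1 =>
    (Polynomial.X * (FGpol l m).1 - Polynomial.C (-l / ((m : ℂ) + 1 + l)) * (FGpol l m).2,
     (FGpol l m).2 - Polynomial.C (-l / ((m : ℂ) + 1 + l)) * (Polynomial.X * (FGpol l m).1))

theorem FGpol_deriv (l : ℂ) (h : ∀ m : ℕ, (m : ℂ) + 1 + l ≠ 0) (m : ℕ) (w : ℂ) :
    w * (FGpol l m).1.derivative.eval w + (FGpol l m).2.derivative.eval w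
        = m * (FGpol l m).1.eval w ∧
      (w - 1) * (FGpol l m).2.derivative.eval w
        = l * ((FGpol l m).1.eval w - (FGpol l m).2.eval w) := by
  induction m with
  | zero => simp [FGpol]
  | succ m ih =>
    obtain ⟨e1, e2⟩ := ih
    have e3 : (-l / ((m : ℂ) + 1 + l)) * ((m : ℂ) + 1 + l) = -l := div_mul_cancel₀ _ (h m)
    simp only [FGpol]
    generalize -l / ((m : ℂ) + 1 + l) = c at e3 ⊢
    simp only [Polynomial.derivative_sub, Polynomial.derivative_mul, Polynomial.derivative_X,
      Polynomial.derivative_C, Polynomial.eval_sub, Polynomial.eval_mul, Polynomial.eval_add,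
      Polynomial.eval_X, Polynomial.eval_C, Polynomial.eval_one, Polynomial.eval_zero]
    generalize (FGpol l m).1.derivative.eval w = F' at *
    generalize (FGpol l m).2.derivative.eval w = G' at *
    generalize (FGpol l m).1.eval w = F at *
    generalize (FGpol l m).2.eval w = G at *
    push_cast
    constructor
    · linear_combination (w - c) * e1 - (1 + c) * e2 - (F - G) * e3
    · linear_combination (w - 1) * (-c) * e1 + (1 + c) * e2 - (w - 1) * F * e3

theorem FGpol_inv (l : ℂ) (m : ℕ) (w : ℂ) (hw : w ≠ 0) :
    (FGpol l m).1.eval w⁻¹ * w ^ m = (FGpol l m).2.eval w ∧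
    (FGpol l m).2.eval w⁻¹ * w ^ m = (FGpol l m).1.eval w := by
  induction m with
  | zero => simp [FGpol]
  | succ m ih =>
    obtain ⟨e1, e2⟩ := ih
    simp only [FGpol, Polynomial.eval_sub, Polynomial.eval_mul, 
      Polynomial.eval_X, Polynomial.eval_C, ← e1, ← e2, pow_succ]
    constructor
    · field_simp
    · field_simp

theorem sievedA_zero (α : ℝ) (N n : ℕ) (hN : 1 ≤ N) (h : ¬ (2 * N ∣ n + 1)) :
    sievedA α α N n = 0 := by
  unfold sievedA
  split_ifs with hd
  · obtain ⟨k, hk⟩ := hd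
    have hk0 : k ≠ 0 := by rintro rfl; simp at hk
    rw [hk, Nat.mul_div_cancel_left _ (by omega)]
    have hodd : Odd k := by
      rw [← Nat.not_even_iff_odd]
      rintro ⟨j, rfl⟩
      exact h ⟨j, by rw [hk]; ring⟩
    unfold jacobiA
    rw [Nat.sub_add_cancel (by omega), hodd.neg_one_pow]
    ring
  · rfl

theorem sievedA_val (α : ℝ) (N m : ℕ) (hN : 1 ≤ N) (n : ℕ) (h : n + 1 = 2 * N * (m + 1)) :
    ((sievedA α α N n : ℝ) : ℂ) = -((α : ℂ) + 1 / 2) / ((m : ℂ) + 1 + ((α : ℂ) + 1 / 2)) := by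
  have hd : N ∣ n + 1 := ⟨2 * (m + 1), by rw [h]; ring⟩
  have hdiv : (n + 1) / N = 2 * (m + 1) := by
    rw [h, show 2 * N * (m + 1) = N * (2 * (m + 1)) by ring, Nat.mul_div_cancel_left _ (by omega)]
  unfold sievedA
  rw [if_pos hd, hdiv]
  unfold jacobiA
  rw [Nat.sub_add_cancel (by omega), show 2 * (m + 1) - 1 = 2 * m + 1 by omega,
    (even_two_mul (m + 1)).neg_one_pow]
  push_cast
  rw [show -((α : ℂ) + 1 / 2 + 1 * (α + 1 / 2)) = 2 * (-(α + 1 / 2)) by ring,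
    show ((2 * (m : ℂ) + 1) + α + α + 2) = 2 * (m + 1 + (α + 1 / 2)) by ring,
    mul_div_mul_left _ _ two_ne_zero]

theorem Phi_shift (α : ℝ) (N : ℕ) (hN : 1 ≤ N) (m r : ℕ) (hr : r < 2 * N) (z : ℂ) :
    Phi (sievedA α α N) (2 * N * m + r) z = z ^ r * Phi (sievedA α α N) (2 * N * m) z := by
  induction r with
  | zero => simp
  | succ r ih =>
    rw [← add_assoc, Phi, ih (by omega), sievedA_zero α N _ hN, pow_succ]
    · push_cast; ring
    · intro hd
      rw [add_assoc, Nat.dvd_add_right (Dvd.intro _ rfl)] at hd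
      exact absurd (Nat.le_of_dvd (by omega) hd) (by omega)

theorem Phi_block (α : ℝ) (N : ℕ) (hN : 1 ≤ N) (m : ℕ) : ∀ (z : ℂ), z ≠ 0 →
    Phi (sievedA α α N) (2 * N * m) z
      = (FGpol ((α : ℂ) + 1 / 2) m).1.eval (z ^ (2 * N)) := by
  induction m with
  | zero => intro z hz; simp [FGpol, Phi]
  | succ m ih =>
    intro z hz
    obtain ⟨r, hr⟩ : ∃ r, 2 * N = r + 1 := ⟨2 * N - 1, by omega⟩
    have e : 2 * N * (m + 1) = (2 * N * m + r) + 1 := by rw [mul_add, mul_one, add_assoc, hr]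
    rw [e, Phi, Phi_shift α N hN m r (by omega), Phi_shift α N hN m r (by omega), ih z hz,
      ih z⁻¹ (inv_ne_zero hz), sievedA_val α N m hN _ e.symm]
    simp only [FGpol, Polynomial.eval_sub, Polynomial.eval_mul, 
      Polynomial.eval_X, Polynomial.eval_C]
    rw [← (FGpol_inv _ m (z ^ (2 * N)) (pow_ne_zero _ hz)).1, inv_pow, ← pow_mul, pow_add, inv_pow, hr]
    generalize (FGpol ((α : ℂ) + 1 / 2) m).1.eval ((z ^ (r + 1))⁻¹) = X
    have hzr : z ^ r * (z ^ r)⁻¹ = 1 := mul_inv_cancel₀ (pow_ne_zero _ hz)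
    generalize -((α : ℂ) + 1 / 2) / ((m : ℂ) + 1 + ((α : ℂ) + 1 / 2)) = c
    linear_combination (-c * z ^ ((r + 1) * m) * X) * hzr

noncomputable def Uf (α : ℝ) (N m p : ℕ) (z : ℂ) : ℂ :=
  z ^ ((p : ℤ) - N * m) * (FGpol ((α : ℂ) + 1 / 2) m).1.eval (z ^ (2 * N))

noncomputable def Vf (α : ℝ) (N m p : ℕ) (z : ℂ) : ℂ :=
  z ^ (-(p : ℤ) - N * m) * (FGpol ((α : ℂ) + 1 / 2) m).2.eval (z ^ (2 * N))

theorem Uf_inv (α : ℝ) (N m p : ℕ) (z : ℂ) (hz : z ≠ 0) :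
    Uf α N m p z⁻¹ = Vf α N m p z := by
  unfold Uf Vf
  rw [← (FGpol_inv _ m (z ^ (2 * N)) (pow_ne_zero _ hz)).1, inv_pow, inv_zpow', 
    show -((p : ℤ) - N * m) = (-(p : ℤ) - N * m) + ((2 * N * m : ℕ) : ℤ) by push_cast; ring,
    zpow_add₀ hz, zpow_natCast, ← pow_mul]
  ring

theorem Uf_rot (α : ℝ) (N m p : ℕ) (x z : ℂ) (hz : z ≠ 0) (hx : x ^ N = 1) (hx0 : x ≠ 0) :
    Uf α N m p (x * z) = x ^ p * Uf α N m p z := by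
  unfold Uf
  rw [mul_zpow, mul_pow, show x ^ (2 * N) = 1 by rw [mul_comm, pow_mul, hx, one_pow],
    one_mul, zpow_sub₀ hx0, zpow_natCast, zpow_mul, zpow_natCast, zpow_natCast, hx, one_pow, div_one]
  ring

theorem Vf_rot (α : ℝ) (N m p : ℕ) (x z : ℂ) (hz : z ≠ 0) (hx : x ^ N = 1) (hx0 : x ≠ 0) :
    Vf α N m p (x * z) = (x ^ p)⁻¹ * Vf α N m p z := by
  unfold Vf
  rw [mul_zpow, mul_pow, show x ^ (2 * N) = 1 by rw [mul_comm, pow_mul, hx, one_pow],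
    one_mul, zpow_sub₀ hx0, zpow_neg, zpow_natCast, zpow_mul, zpow_natCast, zpow_natCast, hx,
    one_pow, div_one]
  ring

theorem sievQ_eq (α : ℝ) (N : ℕ) (hN : 1 ≤ N) (m s : ℕ) (hs : s < N) (z : ℂ) (hz : z ≠ 0) :
    sievQ α N (N * m + s) z
      = (Uf α N m (s + 1) z - Vf α N m (s + 1) z) / (z - z⁻¹) := by
  have key : ∀ y : ℂ, y ≠ 0 →
      y ^ (-((N * m + s : ℕ) : ℤ)) * Phi (sievedA α α N) (2 * (N * m + s) + 1) y
        = Uf α N m (s + 1) y := by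
    intro y hy
    rw [show 2 * (N * m + s) + 1 = 2 * N * m + (2 * s + 1) by ring,
      Phi_shift α N hN m _ (by omega), Phi_block α N hN m y hy, Uf, ← mul_assoc,
      ← zpow_natCast y (2 * s + 1), ← zpow_add₀ hy]
    congr 2
    push_cast; ring
  unfold sievQ
  congr 1
  have h1 := key z hz
  have h2 := key z⁻¹ (inv_ne_zero hz)
  rw [Uf_inv _ _ _ _ _ hz] at h2
  rw [← h1, ← h2]
  generalize N * m + s = n
  unfold psi
  rw [if_pos (by simp [parity_simps]), if_neg (by simp [parity_simps]),
    show (2 * n + 2) / 2 = n + 1 by omega, show (2 * n + 1) / 2 = n by omega, 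
    show 2 * n + 2 = (2 * n + 1) + 1 by ring, Phi, inv_inv, inv_zpow', neg_neg, zpow_neg,
    zpow_natCast, inv_pow, pow_succ, pow_succ, two_mul, pow_add]
  field_simp
  ring

theorem hasDerivAt_Uf (α : ℝ) (hα : -1 < α) (N m p : ℕ) (z : ℂ) (hz : z ≠ 0)
    (hw : z ^ (2 * N) ≠ 1) :
    HasDerivAt (Uf α N m p)
      ((((p : ℂ) + N * m) * Uf α N m p z - N * (2 * α + 1) *
        (Uf α N m p z - z ^ (2 * p) * Vf α N m p z) / (z ^ (2 * N) - 1)) / z) z := by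
  have h : ∀ m : ℕ, (m : ℂ) + 1 + ((α : ℂ) + 1 / 2) ≠ 0 := by
    intro m
    have : ((m : ℝ) + 1 + (α + 1 / 2)) ≠ 0 := by
      have : (0 : ℝ) ≤ m := Nat.cast_nonneg m
      linarith
    have h2 := Complex.ofReal_ne_zero.mpr this
    push_cast at h2
    exact h2
  obtain ⟨e1, e2⟩ := FGpol_deriv _ h m (z ^ (2 * N))
  have hd := (hasDerivAt_zpow ((p : ℤ) - N * m) z (Or.inl hz)).mul
    (((FGpol ((α : ℂ) + 1 / 2) m).1.hasDerivAt (z ^ (2 * N))).comp z (hasDerivAt_pow (2 * N) z))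
  refine hd.congr_deriv ?_
  have hw' : z ^ (2 * N) - 1 ≠ 0 := sub_ne_zero.mpr hw
  have hV : z ^ (2 * p) * Vf α N m p z =
      z ^ ((p : ℤ) - N * m) * (FGpol ((α : ℂ) + 1 / 2) m).2.eval (z ^ (2 * N)) := by
    unfold Vf
    rw [← mul_assoc, ← zpow_natCast z (2 * p), ← zpow_add₀ hz]
    congr 2
    push_cast; ring
  have hpw : ((2 * N : ℕ) : ℂ) * z ^ (2 * N - 1) = 2 * N * z ^ (2 * N) / z := by
    rcases Nat.eq_zero_or_pos N with rfl | hN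
    · simp
    · rw [eq_div_iff hz, mul_assoc, ← pow_succ, Nat.sub_add_cancel (by omega)]; push_cast; ring
  rw [hV, hpw, zpow_sub_one₀ hz]
  unfold Uf
  simp only [Function.comp]
  generalize (FGpol ((α : ℂ) + 1 / 2) m).1.derivative.eval (z ^ (2 * N)) = F' at *
  generalize (FGpol ((α : ℂ) + 1 / 2) m).2.derivative.eval (z ^ (2 * N)) = G' at *
  generalize (FGpol ((α : ℂ) + 1 / 2) m).1.eval (z ^ (2 * N)) = F at *
  generalize (FGpol ((α : ℂ) + 1 / 2) m).2.eval (z ^ (2 * N)) = G at *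
  generalize z ^ (2 * N) = w at *
  generalize z ^ ((p : ℤ) - N * m) = Z at *
  push_cast
  field_simp
  linear_combination (2 * N * Z * (w - 1)) * e1 - (2 * N * Z) * e2

theorem hasDerivAt_Vf (α : ℝ) (hα : -1 < α) (N m p : ℕ) (z : ℂ) (hz : z ≠ 0)
    (hw : z ^ (2 * N) ≠ 1) :
    HasDerivAt (Vf α N m p)
      ((-((p : ℂ) + N * m) * Vf α N m p z + N * (2 * α + 1) * z ^ (2 * N) *
        (Uf α N m p z / z ^ (2 * p) - Vf α N m p z) / (z ^ (2 * N) - 1)) / z) z := by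
  have h : ∀ m : ℕ, (m : ℂ) + 1 + ((α : ℂ) + 1 / 2) ≠ 0 := by
    intro m
    have : ((m : ℝ) + 1 + (α + 1 / 2)) ≠ 0 := by
      have : (0 : ℝ) ≤ m := Nat.cast_nonneg m
      linarith
    have h2 := Complex.ofReal_ne_zero.mpr this
    push_cast at h2
    exact h2
  obtain ⟨e1, e2⟩ := FGpol_deriv _ h m (z ^ (2 * N))
  have hd := (hasDerivAt_zpow (-(p : ℤ) - N * m) z (Or.inl hz)).mul
    (((FGpol ((α : ℂ) + 1 / 2) m).2.hasDerivAt (z ^ (2 * N))).comp z (hasDerivAt_pow (2 * N) z))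
  refine hd.congr_deriv ?_
  have hw' : z ^ (2 * N) - 1 ≠ 0 := sub_ne_zero.mpr hw
  have hV : Uf α N m p z / z ^ (2 * p) =
      z ^ (-(p : ℤ) - N * m) * (FGpol ((α : ℂ) + 1 / 2) m).1.eval (z ^ (2 * N)) := by
    unfold Uf
    rw [div_eq_iff (pow_ne_zero _ hz), mul_right_comm, ← zpow_natCast z (2 * p), ← zpow_add₀ hz]
    congr 2
    push_cast; ring
  have hpw : ((2 * N : ℕ) : ℂ) * z ^ (2 * N - 1) = 2 * N * z ^ (2 * N) / z := by
    rcases Nat.eq_zero_or_pos N with rfl | hN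
    · simp
    · rw [eq_div_iff hz, mul_assoc, ← pow_succ, Nat.sub_add_cancel (by omega)]; push_cast; ring
  rw [hV, hpw, zpow_sub_one₀ hz]
  unfold Vf
  simp only [Function.comp]
  generalize (FGpol ((α : ℂ) + 1 / 2) m).1.derivative.eval (z ^ (2 * N)) = F' at *
  generalize (FGpol ((α : ℂ) + 1 / 2) m).2.derivative.eval (z ^ (2 * N)) = G' at *
  generalize (FGpol ((α : ℂ) + 1 / 2) m).1.eval (z ^ (2 * N)) = F at *
  generalize (FGpol ((α : ℂ) + 1 / 2) m).2.eval (z ^ (2 * N)) = G at *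
  generalize z ^ (2 * N) = w at *
  generalize z ^ (-(p : ℤ) - N * m) = Z at *
  push_cast
  field_simp
  linear_combination (2 * N * Z * w) * e2

theorem qN_prim (N : ℕ) (hN : 1 ≤ N) : IsPrimitiveRoot (qN N) N :=
  Complex.isPrimitiveRoot_exp N (by omega)

theorem qsum_zero (N j : ℕ) (hN : 1 ≤ N) (h0 : 0 < j) (hj : j < N) :
    ∑ k ∈ range N, (qN N ^ k) ^ j = 0 := by
  have hp := qN_prim N hN
  have h1 : qN N ^ j ≠ 1 := hp.pow_ne_one_of_pos_of_lt (by omega) hj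
  have := geom_sum_eq h1 N
  rw [← pow_mul, mul_comm j N, pow_mul, hp.pow_eq_one, one_pow, sub_self, zero_div] at this
  rw [← this]
  exact sum_congr rfl fun k _ => by rw [← pow_mul, ← pow_mul, mul_comm]

theorem qk_pow (N k : ℕ) (hN : 1 ≤ N) : (qN N ^ k) ^ N = 1 := by
  rw [← pow_mul, mul_comm, pow_mul, (qN_prim N hN).pow_eq_one, one_pow]

theorem S_sum (N : ℕ) (hN : 1 ≤ N) (t : ℂ) (ht : t ^ N ≠ 1) (j : ℕ) (hj : j < N) :
    ∑ k ∈ range N, (qN N ^ k) ^ (j + 1) / (qN N ^ k - t) = N * t ^ j / (1 - t ^ N) := by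
  have hne : ∀ k, qN N ^ k - t ≠ 0 := by
    intro k h
    rw [sub_eq_zero] at h
    exact ht (by rw [← h, qk_pow N k hN])
  have hrec : ∀ j, ∑ k ∈ range N, (qN N ^ k) ^ (j + 1) / (qN N ^ k - t)
      = t * ∑ k ∈ range N, (qN N ^ k) ^ j / (qN N ^ k - t) + ∑ k ∈ range N, (qN N ^ k) ^ j := by
    intro j
    rw [mul_sum, ← sum_add_distrib]
    refine sum_congr rfl fun k _ => ?_
    have := hne k
    field_simp
    ring
  have hpow : ∀ j, j < N → ∑ k ∈ range N, (qN N ^ k) ^ (j + 1) / (qN N ^ k - t)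
      = t ^ j * ∑ k ∈ range N, (qN N ^ k) ^ 1 / (qN N ^ k - t) := by
    intro j
    induction j with
    | zero => intro _; simp
    | succ j ih =>
      intro hj
      rw [hrec, ih (by omega), qsum_zero N (j + 1) hN (by omega) hj]
      ring
  have hlast := hrec N
  have e1 : ∀ k, (qN N ^ k) ^ (N + 1) = (qN N ^ k) ^ 1 := fun k => by
    rw [pow_succ, qk_pow N k hN, one_mul, pow_one]
  have e2 : ∑ k ∈ range N, (qN N ^ k) ^ N = (N : ℂ) := by
    simp [qk_pow N _ hN]
  obtain ⟨M, rfl⟩ : ∃ M, N = M + 1 := ⟨N - 1, by omega⟩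
  rw [e2, hpow M (by omega)] at hlast
  simp only [e1] at hlast
  have h1 : (1 : ℂ) - t ^ (M + 1) ≠ 0 := sub_ne_zero.mpr (Ne.symm ht)
  rw [hpow j hj, eq_div_iff h1]
  rw [pow_succ]
  linear_combination t ^ j * hlast

theorem T_sum (N : ℕ) (hN : 1 ≤ N) (t : ℂ) (ht : t ^ N ≠ 1) (j : ℕ) (hj : j ≤ N) :
    ∑ k ∈ range N, t * (qN N ^ k) ^ (j + 1) / (qN N ^ k - t) ^ 2
      = t ^ j * (N ^ 2 * t ^ N / (1 - t ^ N) ^ 2 + j * N / (1 - t ^ N)) := by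
  have hne : ∀ k, qN N ^ k - t ≠ 0 := by
    intro k h
    rw [sub_eq_zero] at h
    exact ht (by rw [← h, qk_pow N k hN])
  have h1 : (1 : ℂ) - t ^ N ≠ 0 := sub_ne_zero.mpr (Ne.symm ht)
  have hrec : ∀ j, j < N → ∑ k ∈ range N, t * (qN N ^ k) ^ (j + 1 + 1) / (qN N ^ k - t) ^ 2
      = t * ∑ k ∈ range N, t * (qN N ^ k) ^ (j + 1) / (qN N ^ k - t) ^ 2
        + t * (N * t ^ j / (1 - t ^ N)) := by
    intro j hj
    rw [← S_sum N hN t ht j hj, mul_sum, mul_sum, ← sum_add_distrib]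
    refine sum_congr rfl fun k _ => ?_
    have := hne k
    field_simp
    ring
  have hpow : ∀ j, j ≤ N → ∑ k ∈ range N, t * (qN N ^ k) ^ (j + 1) / (qN N ^ k - t) ^ 2
      = t ^ j * (∑ k ∈ range N, t * (qN N ^ k) ^ 1 / (qN N ^ k - t) ^ 2 
        + j * N / (1 - t ^ N)) := by
    intro j
    induction j with
    | zero => intro _; simp
    | succ j ih =>
      intro hj
      rw [hrec j (by omega), ih (by omega)]
      push_cast
      ring
  have e1 : ∀ k, (qN N ^ k) ^ (N + 1) = (qN N ^ k) ^ 1 := fun k => by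
    rw [pow_succ, qk_pow N k hN, one_mul, pow_one]
  have hlast := hpow N le_rfl
  simp only [e1] at hlast
  rw [hpow j hj]
  congr 2
  generalize ∑ k ∈ range N, t * (qN N ^ k) ^ 1 / (qN N ^ k - t) ^ 2 = T at *
  field_simp at hlast ⊢
  linear_combination hlast

theorem Vf_inv (α : ℝ) (N m p : ℕ) (z : ℂ) (hz : z ≠ 0) :
    Vf α N m p z⁻¹ = Uf α N m p z := by
  rw [← Uf_inv _ _ _ _ _ (inv_ne_zero hz), inv_inv]

theorem term_eq (α : ℝ) (N : ℕ) (hN : 1 ≤ N) (m s : ℕ) (hs : s < N) (z : ℂ) (hz : z ≠ 0)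
    (hz1 : z ^ 2 ≠ 1) (hz2 : z ^ (2 * N) ≠ 1) (g x : ℂ) (hx : x ^ N = 1) :
    (x ^ 2 - z ^ 2) / (x * (z ^ 2 - 1))
            * (2 * g * x * z ^ 2 / (x - z ^ 2) ^ 2)
            * (sievQ α N (N * m + s) (x / z) - sievQ α N (N * m + s) z)
      = 2 * g * z / (z ^ 2 - 1) *
        (z ^ 2 * x ^ (s + 1 + 1) / (x - z ^ 2) ^ 2 * Vf α N m (s + 1) z
          - z ^ 2 * x ^ (N - (s + 1) + 1) / (x - z ^ 2) ^ 2 * Uf α N m (s + 1) z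
          - (z ^ 2 * x ^ (1 + 1) / (x - z ^ 2) ^ 2
              - z ^ 2 * (z ^ 2 * x ^ (N - 1 + 1) / (x - z ^ 2) ^ 2)) / (z ^ 2 - 1)
            * (Uf α N m (s + 1) z - Vf α N m (s + 1) z)) := by
  have hx0 : x ≠ 0 := by
    rintro rfl
    rw [zero_pow (by omega)] at hx
    exact zero_ne_one hx
  have h1 : z ^ 2 - 1 ≠ 0 := sub_ne_zero.mpr hz1
  have h2 : x - z ^ 2 ≠ 0 := by
    intro h
    rw [sub_eq_zero] at h
    exact hz2 (by rw [pow_mul, ← h, hx])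
  have h3 : x ^ 2 - z ^ 2 ≠ 0 := by
    intro h
    rw [sub_eq_zero] at h
    exact hz2 (by rw [pow_mul, ← h, ← pow_mul, mul_comm, pow_mul, hx, one_pow])
  rw [sievQ_eq α N hN m s hs z hz, sievQ_eq α N hN m s hs (x / z) (div_ne_zero hx0 hz),
    div_eq_mul_inv x z, Uf_rot _ _ _ _ _ _ (inv_ne_zero hz) hx hx0,
    Vf_rot _ _ _ _ _ _ (inv_ne_zero hz) hx hx0, Uf_inv _ _ _ _ _ hz, Vf_inv _ _ _ _ _ hz,
    Nat.sub_add_cancel hN, hx]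
  have hp : x ^ (N - (s + 1) + 1) = x / x ^ (s + 1) := by
    rw [eq_div_iff (pow_ne_zero _ hx0), ← pow_add,
      show N - (s + 1) + 1 + (s + 1) = N + 1 by omega, pow_succ, hx, one_mul]
  rw [hp, pow_succ x (s + 1), show x * z⁻¹ - (x * z⁻¹)⁻¹ = (x ^ 2 - z ^ 2) / (x * z) by field_simp,
    show z - z⁻¹ = (z ^ 2 - 1) / z by field_simp]
  have hy : x ^ (s + 1) ≠ 0 := pow_ne_zero _ hx0
  generalize x ^ (s + 1) = y at *
  generalize Uf α N m (s + 1) z = U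
  generalize Vf α N m (s + 1) z = V
  field_simp

theorem sum_eq (α : ℝ) (N : ℕ) (hN : 1 ≤ N) (m s : ℕ) (hs : s < N) (z : ℂ) (hz : z ≠ 0)
    (hz1 : z ^ 2 ≠ 1) (hz2 : z ^ (2 * N) ≠ 1) (g A W U V : ℂ) 
    (hA : A = z ^ (2 * (s + 1))) (hW : W = z ^ (2 * N)) (hU : U = Uf α N m (s + 1) z)
    (hV : V = Vf α N m (s + 1) z) :
    ∑ k ∈ Finset.range N,
          (qN N ^ (2 * k) - z ^ 2) / (qN N ^ k * (z ^ 2 - 1))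
            * (2 * g * qN N ^ k * z ^ 2 / (qN N ^ k - z ^ 2) ^ 2)
            * (sievQ α N (N * m + s) (qN N ^ k / z) - sievQ α N (N * m + s) z)
      = 2 * g * z / (z ^ 2 - 1) *
        (A * (N ^ 2 * W / (1 - W) ^ 2 + (s + 1) * N / (1 - W)) * V
          - W / A * (N ^ 2 * W / (1 - W) ^ 2 + (N - (s + 1)) * N / (1 - W)) * U
          - (z ^ 2 * (N ^ 2 * W / (1 - W) ^ 2 + N / (1 - W))
              - W * (N ^ 2 * W / (1 - W) ^ 2 + (N - 1) * N / (1 - W))) / (z ^ 2 - 1)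
            * (U - V)) := by
  have ht : (z ^ 2) ^ N ≠ 1 := by rwa [← pow_mul]
  have e1 := T_sum N hN (z ^ 2) ht (s + 1) (by omega)
  have e2 := T_sum N hN (z ^ 2) ht (N - (s + 1)) (by omega)
  have e3 := T_sum N hN (z ^ 2) ht 1 (by omega)
  have e4 := T_sum N hN (z ^ 2) ht (N - 1) (by omega)
  rw [← pow_mul, ← pow_mul, ← hW, ← hA] at e1
  have hA0 : A ≠ 0 := hA ▸ pow_ne_zero _ hz
  have f2 : (z ^ 2) ^ (N - (s + 1)) = W / A := by
    rw [eq_div_iff hA0, hA, hW, ← pow_mul, ← pow_add]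
    congr 1
    omega
  have f4 : z ^ 2 * (z ^ 2) ^ (N - 1) = W := by
    rw [← pow_succ', Nat.sub_add_cancel hN, ← pow_mul, hW]
  rw [f2, ← pow_mul, ← hW, Nat.cast_sub (by omega)] at e2
  rw [pow_one, ← pow_mul, ← hW] at e3
  rw [← pow_mul z 2 N, ← hW, Nat.cast_sub (by omega)] at e4
  push_cast at e1 e2 e3 e4
  rw [one_mul] at e3
  rw [← f4, mul_assoc (z ^ 2) ((z ^ 2) ^ (N - 1)), f4, ← e1, ← e2, ← e3, ← e4, sum_mul, sum_mul,
    mul_sum, ← sum_sub_distrib, ← sum_sub_distrib, sum_div, sum_mul, ← sum_sub_distrib, mul_sum]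
  refine sum_congr rfl fun k _ => ?_
  have := term_eq α N hN m s hs z hz hz1 hz2 g (qN N ^ k) (qk_pow N k hN)
  rw [← hU, ← hV] at this
  rw [show qN N ^ (2 * k) = (qN N ^ k) ^ 2 by rw [← pow_mul, mul_comm]]
  exact this

theorem hasDerivAt_pow' (k : ℕ) (z : ℂ) (hz : z ≠ 0) :
    HasDerivAt (fun y : ℂ => y ^ k) (k * z ^ k / z) z := by
  refine (hasDerivAt_pow k z).congr_deriv ?_
  rcases Nat.eq_zero_or_pos k with rfl | hk
  · simp
  · rw [eq_div_iff hz, mul_assoc, ← pow_succ, Nat.sub_add_cancel (by omega)]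

theorem Q_derivs (Q U V U' V' : ℂ → ℂ) (U'' V'' z : ℂ) (hz : z ≠ 0) (hz1 : z ^ 2 ≠ 1)
    (S : Set ℂ) (hS : IsOpen S) (hzS : z ∈ S)
    (hS0 : ∀ y ∈ S, y ≠ 0 ∧ y ^ 2 ≠ 1)
    (hQ : ∀ y ∈ S, Q y = (U y - V y) / (y - y⁻¹))
    (hU : ∀ y ∈ S, HasDerivAt U (U' y) y) (hV : ∀ y ∈ S, HasDerivAt V (V' y) y)
    (hU' : HasDerivAt U' U'' z) (hV' : HasDerivAt V' V'' z) :
    deriv Q z = ((U' z - V' z) * z / (z ^ 2 - 1) - (U z - V z) * (z ^ 2 + 1) / (z ^ 2 - 1) ^ 2) ∧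
    deriv (deriv Q) z = (U'' - V'') * z / (z ^ 2 - 1)
      - 2 * (U' z - V' z) * (z ^ 2 + 1) / (z ^ 2 - 1) ^ 2
      + (U z - V z) * (2 * z ^ 3 + 6 * z) / (z ^ 2 - 1) ^ 3 := by
  have h1 : ∀ y ∈ S, HasDerivAt Q ((U' y - V' y) * y / (y ^ 2 - 1)
      - (U y - V y) * (y ^ 2 + 1) / (y ^ 2 - 1) ^ 2) y := by
    intro y hy
    obtain ⟨hy0, hy1⟩ := hS0 y hy
    have hy2 : y ^ 2 - 1 ≠ 0 := sub_ne_zero.mpr hy1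
    have hd := (((hU y hy).sub (hV y hy)).mul (hasDerivAt_id y)).div
      ((hasDerivAt_pow 2 y).sub_const 1) hy2
    have hE : Q =ᶠ[nhds y] _ := Filter.eventuallyEq_of_mem (hS.mem_nhds hy)
      (fun w hw => by
        obtain ⟨hw0, hw1⟩ := hS0 w hw
        have hw2 : w ^ 2 - 1 ≠ 0 := sub_ne_zero.mpr hw1
        rw [hQ w hw, show w - w⁻¹ = (w ^ 2 - 1) / w by field_simp, div_div_eq_mul_div])
    refine (hd.congr_of_eventuallyEq hE).congr_deriv ?_
    simp only [Pi.mul_apply, Pi.sub_apply, id]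
    push_cast
    field_simp
    ring
  refine ⟨(h1 z hzS).deriv, ?_⟩
  have hz2 : z ^ 2 - 1 ≠ 0 := sub_ne_zero.mpr hz1
  have hE := Filter.eventuallyEq_of_mem (hS.mem_nhds hzS) (fun w hw => (h1 w hw).deriv)
  rw [hE.deriv_eq]
  have ha := ((hU'.sub hV').mul (hasDerivAt_id z)).div
      ((hasDerivAt_pow 2 z).sub_const 1) hz2
  have hb := (((hU z hzS).sub (hV z hzS)).mul ((hasDerivAt_pow 2 z).add_const 1)).div
      (((hasDerivAt_pow 2 z).sub_const 1).pow 2) (pow_ne_zero 2 hz2)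
  refine ((ha.sub hb).congr_deriv ?_).deriv
  simp only [Pi.mul_apply, Pi.sub_apply, Pi.pow_apply, id]
  push_cast
  field_simp
  ring

/-- in the ultraspherical case α = β, the sieved ultraspherical polynomial
of the second kind 𝒬_n satisfies the explicit eigenvalue equation with eigenvalue
n(n + (2α+1)N + 2). -/
theorem stmt_18 (α : ℝ) (hα : -1 < α) (N : ℕ) (hN : 1 ≤ N) (n : ℕ)
    (z : ℂ) (hz : z ≠ 0) (hz1 : z ^ 2 ≠ 1) (hz2 : z ^ (2 * N) ≠ 1) :
    z ^ 2 * deriv (deriv (sievQ α N n)) z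
      + (z * (1 + (N : ℂ) * (2 * (α : ℂ) + 1)
            + 2 * (N : ℂ) * (2 * (α : ℂ) + 1) / (z ^ (2 * N) - 1))
          + 2 * z * (z ^ 2 + 1) / (z ^ 2 - 1)) * deriv (sievQ α N n) z
      + ∑ k ∈ Finset.range N,
          (qN N ^ (2 * k) - z ^ 2) / (qN N ^ k * (z ^ 2 - 1))
            * (2 * (2 * (α : ℂ) + 1) * qN N ^ k * z ^ 2 / (qN N ^ k - z ^ 2) ^ 2)
            * (sievQ α N n (qN N ^ k / z) - sievQ α N n z)
      = (n : ℂ) * ((n : ℂ) + (2 * (α : ℂ) + 1) * N + 2) * sievQ α N n z := by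
  obtain ⟨m, s, hs, rfl⟩ : ∃ m s, s < N ∧ n = N * m + s :=
    ⟨n / N, n % N, Nat.mod_lt _ (by omega), (Nat.div_add_mod n N).symm⟩
  rw [sum_eq α N hN m s hs z hz hz1 hz2 _ _ _ _ _ rfl rfl rfl rfl]
  have hw' : z ^ (2 * N) - 1 ≠ 0 := sub_ne_zero.mpr hz2
  have hA0 : z ^ (2 * (s + 1)) ≠ 0 := pow_ne_zero _ hz
  have hU := hasDerivAt_Uf α hα N m (s + 1) z hz hz2
  have hV := hasDerivAt_Vf α hα N m (s + 1) z hz hz2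
  have hA := hasDerivAt_pow' (2 * (s + 1)) z hz
  have hW := hasDerivAt_pow' (2 * N) z hz
  have hU' := ((hU.const_mul (((s + 1 : ℕ) : ℂ) + N * m)).sub
    (((hU.sub (hA.mul hV)).const_mul ((N : ℂ) * (2 * α + 1))).div (hW.sub_const 1) hw')).div
    (hasDerivAt_id z) hz
  have hV' := ((hV.const_mul (-(((s + 1 : ℕ) : ℂ) + N * m))).add
    (((hW.const_mul ((N : ℂ) * (2 * α + 1))).mul ((hU.div hA hA0).sub hV)).div
      (hW.sub_const 1) hw')).div (hasDerivAt_id z) hz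
  have hS : IsOpen {y : ℂ | y ≠ 0 ∧ y ^ 2 ≠ 1 ∧ y ^ (2 * N) ≠ 1} := by
    refine isOpen_ne.inter ((isOpen_ne_fun (by fun_prop) (by fun_prop)).inter
      (isOpen_ne_fun (by fun_prop) (by fun_prop)))
  obtain ⟨d1, d2⟩ := Q_derivs (sievQ α N (N * m + s)) (Uf α N m (s + 1)) (Vf α N m (s + 1))
    _ _ _ _ z hz hz1 _ hS ⟨hz, hz1, hz2⟩ (fun y hy => ⟨hy.1, hy.2.1⟩)
    (fun y hy => sievQ_eq α N hN m s hs y hy.1)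
    (fun y hy => hasDerivAt_Uf α hα N m (s + 1) y hy.1 hy.2.2)
    (fun y hy => hasDerivAt_Vf α hα N m (s + 1) y hy.1 hy.2.2) hU' hV'
  rw [d2, d1, sievQ_eq α N hN m s hs z hz]
  simp only [Pi.mul_apply, Pi.sub_apply, Pi.add_apply, Pi.div_apply, id]
  clear d1 d2 hU hV hA hW hU' hV' hS
  have h2 : z ^ 2 - 1 ≠ 0 := sub_ne_zero.mpr hz1
  rw [show z - z⁻¹ = (z ^ 2 - 1) / z by field_simp]
  generalize Uf α N m (s + 1) z = U at *
  generalize Vf α N m (s + 1) z = V at *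
  generalize z ^ (2 * (s + 1)) = A at *
  generalize z ^ (2 * N) = W at *
  rw [← neg_sub W 1]
  push_cast
  generalize (N : ℂ) = K
  generalize (2 * (α : ℂ) + 1) = g
  generalize (s : ℂ) = s
  generalize (m : ℂ) = m
  field_simp
  ring
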